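/- For every odd prime p, the number of quadratic residues of p lying in [1, (p−1)/2] satisfies 4·R_b(p) ≥ p − 1; in particular R_b(p) ≥ (p−1)/4, with equality exactly when p ≡ 1 (mod 4). -/

import Mathlib

section
open Finset

lemma abel_bound (c b : ℕ → ℝ) (D : ℝ) (hc : ∀ n, |∑ i ∈ range n, c i| ≤ D)
    (hb : Antitone b) (hb0 : ∀ n, 0 ≤ b n) (n : ℕ) :
    |∑ i ∈ range n, c i * b i| ≤ D * b 0 := by
  have key : ∀ n, |∑ i ∈ range n, c i * b i - (∑ i ∈ range n, c i) * b n| ≤ D * (b 0 - b n) := by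
    intro n
    induction n with
    | zero => simp
    | succ n ih =>
      have h1 : ∑ i ∈ range (n+1), c i * b i - (∑ i ∈ range (n+1), c i) * b (n+1)
          = (∑ i ∈ range n, c i * b i - (∑ i ∈ range n, c i) * b n)
            + (∑ i ∈ range (n+1), c i) * (b n - b (n+1)) := by
        simp only [sum_range_succ]; ring
      have h2 : 0 ≤ b n - b (n+1) := sub_nonneg.2 (hb (Nat.le_succ n))
      have h3 : |(∑ i ∈ range (n+1), c i) * (b n - b (n+1))| ≤ D * (b n - b (n+1)) := by
        rw [abs_mul, abs_of_nonneg h2]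
        exact mul_le_mul_of_nonneg_right (hc _) h2
      rw [h1]
      refine (abs_add_le _ _).trans ?_
      linarith
  have h4 : |(∑ i ∈ range n, c i) * b n| ≤ D * b n := by
    rw [abs_mul, abs_of_nonneg (hb0 n)]
    exact mul_le_mul_of_nonneg_right (hc _) (hb0 n)
  have := abs_add_le (∑ i ∈ range n, c i * b i - (∑ i ∈ range n, c i) * b n)
    ((∑ i ∈ range n, c i) * b n)
  rw [sub_add_cancel] at this
  linarith [key n]

lemma tail_bound (c b : ℕ → ℝ) (D : ℝ) (hc : ∀ n, |∑ i ∈ range n, c i| ≤ D)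
    (hb : ∀ m n, 1 ≤ m → m ≤ n → b n ≤ b m) (hb0 : ∀ n, 0 ≤ b n) (M : ℕ) (hM : 1 ≤ M)
    (L : ℝ) (hL : HasSum (fun n => c n * b n) L) :
    |L - ∑ i ∈ range M, c i * b i| ≤ 2 * D * b M := by
  have ht := hL.tendsto_sum_nat
  have ht2 := ((Filter.tendsto_add_atTop_iff_nat M).2 ht).sub_const (∑ i ∈ range M, c i * b i)
  refine le_of_tendsto ht2.abs (Filter.Eventually.of_forall fun n => ?_)
  have h1 : ∑ i ∈ range (n + M), c i * b i - ∑ i ∈ range M, c i * b i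
      = ∑ i ∈ range n, c (M + i) * b (M + i) := by
    rw [add_comm n M, sum_range_add]; ring
  rw [h1]
  refine abel_bound (fun i => c (M + i)) (fun i => b (M + i)) (2 * D) ?_ ?_ ?_ n
  · intro n
    have h2 : ∑ i ∈ range n, c (M + i) = ∑ i ∈ range (M + n), c i - ∑ i ∈ range M, c i := by
      rw [sum_range_add]; ring
    rw [h2]
    refine (abs_sub _ _).trans ?_
    linarith [hc (M+n), hc M]
  · intro i j hij
    exact hb _ _ (by omega) (by omega)
  · intro i; exact hb0 _

lemma dirichlet_nonneg (c : ℕ →*₀ ℝ) (hc1 : ∀ n, |c n| ≤ 1) (s : ℝ) (hs : 1 < s) :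
    Summable (fun n => c n * (n:ℝ) ^ (-s)) ∧ 0 ≤ ∑' n, c n * (n:ℝ) ^ (-s) := by
  let f : ℕ →*₀ ℝ :=
    { toFun := fun n => c n * (n:ℝ) ^ (-s)
      map_zero' := by simp
      map_one' := by simp
      map_mul' := by
        intro m n
        simp only [map_mul, Nat.cast_mul]
        rw [Real.mul_rpow (by positivity) (by positivity)]
        ring }
  have hle : ∀ n, ‖f n‖ ≤ (n:ℝ) ^ (-s) := by
    intro n
    change ‖c n * (n:ℝ) ^ (-s)‖ ≤ _
    have : 0 ≤ (n:ℝ) ^ (-s) := by positivity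
    rw [norm_mul, Real.norm_eq_abs, Real.norm_of_nonneg this]
    exact mul_le_of_le_one_left this (hc1 n)
  have hsum : Summable (fun n => ‖f n‖) :=
    Summable.of_nonneg_of_le (fun _ => norm_nonneg _) hle
      (Real.summable_nat_rpow.2 (by linarith))
  refine ⟨hsum.of_norm, ?_⟩
  have hp := EulerProduct.eulerProduct_completely_multiplicative_hasProd (f := f) hsum
  refine ge_of_tendsto' hp fun S => prod_nonneg fun q _ => ?_
  have hq : ‖f q‖ ≤ 1 := (hle q).trans
    (Real.rpow_le_one_of_one_le_of_nonpos (by exact_mod_cast q.2.one_lt.le) (by linarith))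
  have := (abs_le.1 hq).2
  exact inv_nonneg.2 (by linarith)

lemma abel_limit_nonneg (c : ℕ →*₀ ℝ) (hc1 : ∀ n, |c n| ≤ 1) (D : ℝ)
    (hc : ∀ n, |∑ i ∈ range n, c i| ≤ D) (F : ℝ → ℝ) (l : ℝ)
    (hF : ∀ r, 0 < r → r < 1 → HasSum (fun n : ℕ => c n * (r ^ n / n)) (F r))
    (hl : Filter.Tendsto F (nhdsWithin 1 (Set.Iio 1)) (nhds l)) : 0 ≤ l := by
  have hD : 0 ≤ D := (abs_nonneg _).trans (hc 0)
  have key : ∀ M : ℕ, 1 ≤ M → -(4 * D * (1 / M)) ≤ l := by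
    intro M hM
    have h1 : |l - ∑ i ∈ range M, c i * (1 / i)| ≤ 2 * D * (1 / M) := by
      have ht : Filter.Tendsto (fun r : ℝ => ∑ i ∈ range M, c i * (r ^ i / i))
          (nhdsWithin 1 (Set.Iio 1)) (nhds (∑ i ∈ range M, c i * (1 / i))) := by
        have : Continuous (fun r : ℝ => ∑ i ∈ range M, c i * (r ^ i / i)) := by fun_prop
        have h := (this.tendsto 1).mono_left (nhdsWithin_le_nhds (s := Set.Iio 1))
        simpa using h
      refine le_of_tendsto (hl.sub ht).abs ?_
      filter_upwards [Ioo_mem_nhdsLT (show (0:ℝ) < 1 by norm_num)] with r hr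
      have := tail_bound c (fun n => r ^ n / n) D hc ?_ ?_ M hM (F r) (hF r hr.1 hr.2)
      · refine this.trans ?_
        have : r ^ M / M ≤ 1 / M := by
          gcongr
          exact pow_le_one₀ hr.1.le hr.2.le
        exact mul_le_mul_of_nonneg_left this (by positivity)
      · intro m n hm hmn
        have hm' : (0:ℝ) < m := by exact_mod_cast hm
        have h1 : r ^ n ≤ r ^ m := pow_le_pow_of_le_one hr.1.le hr.2.le hmn
        have h2 : (m:ℝ) ≤ n := by exact_mod_cast hmn
        have h3 := pow_pos hr.1 m
        exact div_le_div₀ h3.le h1 hm' h2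
      · intro n
        have := hr.1
        positivity
    have h2 : -(2 * D * (1 / M)) ≤ ∑ i ∈ range M, c i * (1 / i) := by
      have ht : Filter.Tendsto (fun s : ℝ => ∑ i ∈ range M, c i * (i:ℝ) ^ (-s))
          (nhdsWithin 1 (Set.Ioi 1)) (nhds (∑ i ∈ range M, c i * (1 / i))) := by
        refine tendsto_finsetSum _ fun i _ => ?_
        rcases Nat.eq_zero_or_pos i with rfl | hi
        · simp
        · have hi' : (0:ℝ) < i := by exact_mod_cast hi
          have : Continuous (fun s : ℝ => c i * (i:ℝ) ^ (-s)) := by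
            refine continuous_const.mul ?_
            exact (Real.continuous_const_rpow hi'.ne').comp continuous_neg
          have h := (this.tendsto 1).mono_left (nhdsWithin_le_nhds (s := Set.Ioi 1))
          simpa [Real.rpow_neg_one] using h
      refine ge_of_tendsto ht ?_
      filter_upwards [self_mem_nhdsWithin] with s hs
      have hs : 1 < s := hs
      obtain ⟨hsm, hn⟩ := dirichlet_nonneg c hc1 s hs
      have := tail_bound c (fun n => (n:ℝ) ^ (-s)) D hc ?_ ?_ M hM _ hsm.hasSum
      · have h3 : (M:ℝ) ^ (-s) ≤ 1 / M := by
          rw [one_div, ← Real.rpow_neg_one]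
          exact Real.rpow_le_rpow_of_exponent_le (by exact_mod_cast hM) (by linarith)
        have h4 : 2 * D * (M:ℝ) ^ (-s) ≤ 2 * D * (1 / M) :=
          mul_le_mul_of_nonneg_left h3 (by positivity)
        have := (abs_le.1 this).2
        linarith
      · intro m n hm hmn
        exact Real.rpow_le_rpow_of_nonpos (by exact_mod_cast hm) (by exact_mod_cast hmn)
          (by linarith)
      · intro n; positivity
    have := (abs_le.1 h1).1
    linarith
  have ht : Filter.Tendsto (fun M : ℕ => -(4 * D * (1 / (M:ℝ)))) Filter.atTop (nhds 0) := by
    have := (tendsto_one_div_atTop_nhds_zero_nat (𝕜 := ℝ)).const_mul (4 * D)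
    simpa using this.neg
  exact le_of_tendsto ht (Filter.eventually_atTop.2 ⟨1, key⟩)

end

section
open Finset Real

lemma cot_step (α β θ : ℝ) (h : β = α + 2 * θ) (hs : sin θ ≠ 0) :
    2 * sin α = -(sin β - sin α) - cos θ / sin θ * (cos β - cos α) := by
  have h1 : cos β - cos α = -2 * sin (α + θ) * sin θ := by
    rw [cos_sub_cos, h]; congr 2 <;> [congr 2; skip] <;> ring_nf
  have h2 : sin β + sin α = 2 * sin (α + θ) * cos θ := by
    have hb : β = (α + θ) + θ := by rw [h]; ring
    have ha : α = (α + θ) - θ := by ring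
    rw [hb, sin_add]; nth_rw 3 [ha]; rw [sin_sub]; ring
  rw [h1]
  field_simp
  linear_combination h2

lemma cot_anti (a b : ℝ) (ha : 0 < a) (hab : a ≤ b) (hb : b < π) :
    cos b / sin b ≤ cos a / sin a := by
  have h1 : 0 < sin a := sin_pos_of_pos_of_lt_pi ha (by linarith)
  have h2 : 0 < sin b := sin_pos_of_pos_of_lt_pi (by linarith) hb
  rw [div_le_div_iff₀ h2 h1]
  have := sin_nonneg_of_nonneg_of_le_pi (x := b - a) (by linarith) (by linarith)
  rw [sin_sub] at this
  linarith

lemma gauss_partial (p : ℝ) (hp : 0 < p) (B : ℕ) (hB : (2 * B + 1 : ℝ) < p) :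
    -sin (2 * π * (B + 1) ^ 2 / p)
      + cos (π * (2 * B + 1) / p) / sin (π * (2 * B + 1) / p)
        * (1 - cos (2 * π * (B + 1) ^ 2 / p))
    ≤ 2 * ∑ s ∈ range (B + 1), sin (2 * π * (s : ℝ) ^ 2 / p) := by
  induction B with
  | zero =>
    have hlt : π * 1 / p < π := by
      rw [div_lt_iff₀ hp]; push_cast at hB; nlinarith [pi_pos]
    have hs : sin (π * 1 / p) ≠ 0 :=
      (sin_pos_of_pos_of_lt_pi (by positivity) hlt).ne'
    have := cot_step 0 (2 * π / p) (π * 1 / p) (by ring) hs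
    simp at this ⊢
    linarith
  | succ B ih =>
    push_cast at hB ⊢
    have ih := ih (by linarith)
    have hlt : π * (2 * ((B:ℝ) + 1) + 1) / p < π := by
      rw [div_lt_iff₀ hp]; nlinarith [pi_pos]
    have hs : sin (π * (2 * ((B:ℝ) + 1) + 1) / p) ≠ 0 :=
      (sin_pos_of_pos_of_lt_pi (by positivity) hlt).ne'
    have h1 := cot_step (2 * π * ((B:ℝ) + 1) ^ 2 / p) (2 * π * ((B:ℝ) + 1 + 1) ^ 2 / p)
      (π * (2 * ((B:ℝ) + 1) + 1) / p) (by field_simp; ring) hs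
    have h2 := cot_anti (π * (2 * (B:ℝ) + 1) / p) (π * (2 * ((B:ℝ) + 1) + 1) / p)
      (by positivity) (by gcongr; linarith) hlt
    have h3 : 0 ≤ 1 - cos (2 * π * ((B:ℝ) + 1) ^ 2 / p) := by linarith [cos_le_one (2 * π * ((B:ℝ) + 1) ^ 2 / p)]
    have h4 := mul_le_mul_of_nonneg_right h2 h3
    rw [sum_range_succ]
    push_cast
    linarith

/-- values near the end -/
lemma sin_end (p k B v : ℕ) (hp : p = 4 * k + 3) (hv : 2 * B + (2 * v + 1) = p) :
    sin (2 * π * (B:ℝ) ^ 2 / p) = cos (π * (2 * v + 1 : ℝ) ^ 2 / (2 * p)) := by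
  have hp0 : (p:ℝ) ≠ 0 := by
    have : p ≠ 0 := by omega
    exact_mod_cast this
  have hpk : (p:ℝ) = 4 * k + 3 := by rw [hp]; push_cast; ring
  have hB : (B:ℝ) = (p - (2 * v + 1)) / 2 := by
    rw [← hv]; push_cast; ring
  have : 2 * π * (B:ℝ) ^ 2 / p
      = (π * (2 * v + 1 : ℝ) ^ 2 / (2 * p) + π / 2) + ((k:ℤ) - (v:ℤ) : ℤ) * (2 * π) := by
    rw [hB]
    push_cast
    have h5 : (k:ℝ) = (p - 3) / 4 := by rw [hpk]; ring
    rw [h5]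
    field_simp
    ring
  rw [this, sin_add_int_mul_two_pi, sin_add_pi_div_two]

lemma gauss_im_bound (p k : ℕ) (hp : p = 4 * k + 3) :
    -√p < 2 * ∑ s ∈ range ((p + 1) / 2), sin (2 * π * (s : ℝ) ^ 2 / p) := by
  have hpk : (p:ℝ) = 4 * k + 3 := by rw [hp]; push_cast; ring
  have hp0 : (0:ℝ) < p := by rw [hpk]; positivity
  -- choose v maximal with (2v+1)^2 ≤ p
  obtain ⟨v, hv1, hv2⟩ : ∃ v : ℕ, (2 * v + 1) ^ 2 ≤ p ∧ p < (2 * v + 3) ^ 2 := by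
    have hex : ∃ v : ℕ, p < (2 * v + 3) ^ 2 := ⟨p, by nlinarith⟩
    refine ⟨Nat.find hex, ?_, Nat.find_spec hex⟩
    rcases Nat.eq_zero_or_pos (Nat.find hex) with h | h
    · rw [h]; omega
    · have := Nat.find_min hex (m := Nat.find hex - 1) (by omega)
      have h2 : 2 * (Nat.find hex - 1) + 3 = 2 * Nat.find hex + 1 := by omega
      rw [h2] at this
      omega
  have hvp : 2 * v + 1 < p := by
    rcases Nat.eq_zero_or_pos v with h | h
    · subst h; omega
    · nlinarith
  obtain ⟨B, hB⟩ : ∃ B : ℕ, 2 * (B + 1) + (2 * v + 1) = p := ⟨2 * k + 1 - v - 1, by omega⟩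
  have hBr : (2 * ((B:ℝ) + 1) + (2 * v + 1)) = p := by rw [← hB]; push_cast; ring
  have hpart := gauss_partial p hp0 B (by linarith [(Nat.cast_nonneg v : (0:ℝ) ≤ v)])
  have hsplit : (p + 1) / 2 = (B + 1) + (v + 1) := by omega
  have hpos : ∀ w : ℕ, w ≤ v → ∀ C : ℕ, 2 * C + (2 * w + 1) = p →
      0 ≤ sin (2 * π * (C : ℝ) ^ 2 / p) := by
    intro w hw C hC
    rw [sin_end p k C w hp hC]
    have h1 : ((2 * w + 1 : ℝ)) ^ 2 ≤ p := by
      have : (2 * w + 1) ^ 2 ≤ p := le_trans (Nat.pow_le_pow_left (by omega) 2) hv1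
      exact_mod_cast this
    apply cos_nonneg_of_neg_pi_div_two_le_of_le
    · have : 0 ≤ π * (2 * w + 1 : ℝ) ^ 2 / (2 * p) := by positivity
      linarith [pi_pos]
    · rw [div_le_div_iff₀ (by positivity) (by norm_num)]
      nlinarith [pi_pos]
  have hBnn : 0 ≤ sin (2 * π * ((B:ℝ) + 1) ^ 2 / p) := by
    have := hpos v le_rfl (B + 1) hB
    push_cast at this; exact this
  rw [hsplit, sum_range_add]
  have hrest : sin (2 * π * ((B:ℝ) + 1) ^ 2 / p)
      ≤ ∑ x ∈ range (v + 1), sin (2 * π * ((B + 1 + x : ℕ) : ℝ) ^ 2 / p) := by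
    rw [sum_range_succ']
    have : 0 ≤ ∑ x ∈ range v, sin (2 * π * ((B + 1 + (x + 1) : ℕ) : ℝ) ^ 2 / p) := by
      refine sum_nonneg fun x hx => ?_
      have hx := mem_range.1 hx
      exact hpos (v - (x + 1)) (by omega) _ (by omega)
    push_cast at this ⊢
    simp only [add_zero]
    linarith
  -- bound for cot
  have hcot : -(√p / 2) < cos (π * (2 * B + 1) / p) / sin (π * (2 * B + 1) / p) := by
    set φ : ℝ := π * (2 * v + 2) / p with hφ
    have hang : π * (2 * (B:ℝ) + 1) / p = π - φ := by
      rw [hφ]; field_simp; linarith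
    have hsp : 0 < √(p:ℝ) := sqrt_pos.2 hp0
    have hss : √(p:ℝ) * √p = p := mul_self_sqrt hp0.le
    have hφ0 : 0 < φ := by positivity
    have hφπ : φ < π := by
      have : 0 < π * (2 * (B:ℝ) + 1) / p := by positivity
      linarith
    rw [hang, cos_pi_sub, sin_pi_sub, neg_div, neg_lt_neg_iff]
    have hsφ : 0 < sin φ := sin_pos_of_pos_of_lt_pi hφ0 hφπ
    rcases le_or_gt (π / 2) φ with h | h
    · have : cos φ ≤ 0 := cos_nonpos_of_pi_div_two_le_of_le h (by linarith)
      have := div_nonpos_of_nonpos_of_nonneg this hsφ.le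
      linarith
    · have hcφ : 0 < cos φ := cos_pos_of_mem_Ioo ⟨by linarith, h⟩
      have ht := lt_tan hφ0 h
      rw [tan_eq_sin_div_cos, lt_div_iff₀ hcφ] at ht
      have h2 : cos φ / sin φ < 1 / φ := by
        rw [div_lt_div_iff₀ hsφ hφ0]; linarith
      refine h2.trans_le ?_
      rw [div_le_div_iff₀ hφ0 (by norm_num), hφ]
      have hv3 : √(p:ℝ) < 2 * v + 3 := by
        rw [sqrt_lt' (by positivity)]
        exact_mod_cast hv2
      -- 2 ≤ √p * (π (2v+2)/p)
      have h3 : 2 * √(p:ℝ) ≤ π * (2 * v + 2) := by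
        rcases le_or_gt (√(p:ℝ)) π with h | h
        · nlinarith [pi_pos, (Nat.cast_nonneg v : (0:ℝ) ≤ v)]
        · nlinarith [pi_gt_three]
      rw [one_mul, ← mul_div_assoc, le_div_iff₀ hp0]
      nlinarith
  have hc0 : 0 ≤ 1 - cos (2 * π * ((B:ℝ) + 1) ^ 2 / p) := by
    linarith [cos_le_one (2 * π * ((B:ℝ) + 1) ^ 2 / p)]
  have hc2 : 1 - cos (2 * π * ((B:ℝ) + 1) ^ 2 / p) ≤ 2 := by
    linarith [neg_one_le_cos (2 * π * ((B:ℝ) + 1) ^ 2 / p)]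
  have hsp : 0 < √(p:ℝ) := sqrt_pos.2 hp0
  set ct := cos (π * (2 * B + 1) / p) / sin (π * (2 * B + 1) / p)
  set u := 1 - cos (2 * π * ((B:ℝ) + 1) ^ 2 / p)
  have hfin : -√(p:ℝ) < ct * u := by
    rcases le_or_gt 0 ct with h | h
    · nlinarith [mul_nonneg h hc0]
    · nlinarith
  linarith


lemma sum_zmod_eq_range {M : Type*} [AddCommMonoid M] (p : ℕ) [NeZero p] (f : ZMod p → M) :
    ∑ a : ZMod p, f a = ∑ n ∈ range p, f (n : ZMod p) := by
  refine Finset.sum_bij' (fun a _ => a.val) (fun n _ => (n : ZMod p)) ?_ ?_ ?_ ?_ ?_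
  · intro a _; exact mem_range.2 (ZMod.val_lt a)
  · intro n _; exact mem_univ _
  · intro a _; simp
  · intro n hn; exact ZMod.val_cast_of_lt (mem_range.1 hn)
  · intro a _; simp

lemma sum_fold1 {M : Type*} [AddCommMonoid M] (p h : ℕ) (hp : p = 2 * h + 1) (F : ℕ → M) :
    ∑ j ∈ range p, F j
      = F 0 + ∑ i ∈ range h, (F (i + 1) + F (p - (i + 1))) := by
  subst hp
  rw [sum_range_succ', add_comm, two_mul, sum_range_add, sum_add_distrib]
  congr 2
  rw [← sum_range_reflect]
  refine sum_congr rfl fun i hi => ?_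
  have := mem_range.1 hi
  congr 1; omega

lemma sum_fold2 {M : Type*} [AddCommMonoid M] (p h : ℕ) (hp : p = 2 * h + 1) (F : ℕ → M) :
    ∑ j ∈ range p, F j
      = F 0 + ∑ i ∈ range h, (F (2 * (i + 1)) + F (p - 2 * (i + 1))) := by
  subst hp
  have h1 : ∑ j ∈ range (2 * h + 1), F j
      = F 0 + ∑ i ∈ range h, (F (2 * (i + 1)) + F (2 * i + 1)) := by
    induction h with
    | zero => simp
    | succ h ih =>
      rw [show 2 * (h + 1) + 1 = 2 * h + 1 + 1 + 1 by ring, sum_range_succ, sum_range_succ, ih,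
        sum_range_succ, add_assoc, add_assoc, show 2 * h + 1 + 1 = 2 * (h + 1) by ring,
        add_comm (F (2 * h + 1))]
  rw [h1, sum_add_distrib, sum_add_distrib]
  congr 2
  rw [← sum_range_reflect]
  refine sum_congr rfl fun i hi => ?_
  have := mem_range.1 hi
  congr 1; omega

lemma char_ne_two (p : ℕ) [Fact p.Prime] (hp2 : p ≠ 2) : ringChar (ZMod p) ≠ 2 := by
  rwa [ZMod.ringChar_zmod_n]

lemma std_im (p : ℕ) [NeZero p] (n : ℕ) :
    (ZMod.stdAddChar (n : ZMod p)).im = sin (2 * π * n / p) := by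
  have := ZMod.stdAddChar_coe (N := p) (n : ℤ)
  rw [Int.cast_natCast] at this
  rw [this]
  have h : (2 * π * Complex.I * ((n : ℤ) : ℂ) / p) = ((2 * π * n / p : ℝ) : ℂ) * Complex.I := by
    push_cast; ring
  rw [h, Complex.exp_ofReal_mul_I_im]

lemma int_mul_im (n : ℤ) (z : ℂ) : ((n : ℂ) * z).im = (n : ℝ) * z.im := by simp

lemma gauss_real (p k : ℕ) [Fact p.Prime] (hp : p = 4 * k + 3) (m : ℕ) :
    ∑ n ∈ range p, (quadraticChar (ZMod p) (n : ZMod p) : ℝ) * sin (2 * π * (m * n : ℕ) / p)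
      = (quadraticChar (ZMod p) (m : ZMod p) : ℝ) * √p := by
  have hp2 : p ≠ 2 := by omega
  have hch := char_ne_two p hp2
  have hp0 : (0:ℝ) < p := by
    have : 0 < p := by omega
    exact_mod_cast this
  set χ : MulChar (ZMod p) ℂ := (quadraticChar (ZMod p)).ringHomComp (Int.castRingHom ℂ) with hχ
  have hχa : ∀ a, χ a = ((quadraticChar (ZMod p) a : ℤ) : ℂ) := fun a => rfl
  set ψ : AddChar (ZMod p) ℂ := ZMod.stdAddChar with hψ
  have hprim : ψ.IsPrimitive := ZMod.isPrimitive_stdAddChar p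
  have hχ1 : χ ≠ 1 := by
    obtain ⟨a, ha⟩ := quadraticChar_exists_neg_one hch
    intro h
    have h0 : a ≠ 0 := by rintro rfl; simp at ha
    have h1 := hχa a
    rw [h, ha, MulChar.one_apply (isUnit_iff_ne_zero.2 h0)] at h1
    norm_num at h1
  have hχq : χ.IsQuadratic := (quadraticChar_isQuadratic (ZMod p)).comp _
  have hneg : χ (-1) = -1 := by
    rw [hχa, quadraticChar_neg_one hch, ZMod.card, ZMod.χ₄_nat_three_mod_four (by omega)]
    norm_num
  have hsq : gaussSum χ ψ ^ 2 = -(p:ℂ) := by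
    rw [gaussSum_sq hχ1 hχq hprim, hneg, ZMod.card]; ring
  have hψ1 : ∑ a, ψ a = 0 := AddChar.sum_eq_zero_of_ne_one (by
    intro h
    have := hprim (one_ne_zero (α := ZMod p))
    rw [AddChar.mulShift_one] at this
    exact this h)
  have hG : gaussSum χ ψ = ∑ x : ZMod p, ψ (x ^ 2) := by
    have h1 : ∑ x : ZMod p, ψ (x ^ 2)
        = ∑ a : ZMod p, ∑ x ∈ univ.filter (fun x : ZMod p => x ^ 2 = a), ψ (x ^ 2) :=
      (sum_fiberwise univ (fun x : ZMod p => x ^ 2) (fun x => ψ (x ^ 2))).symm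
    have h2 : ∀ a : ZMod p, ∑ x ∈ univ.filter (fun x : ZMod p => x ^ 2 = a), ψ (x ^ 2)
        = χ a * ψ a + ψ a := by
      intro a
      have h3 : ∀ x ∈ univ.filter (fun x : ZMod p => x ^ 2 = a), ψ (x ^ 2) = ψ a := by
        intro x hx; rw [(mem_filter.1 hx).2]
      rw [sum_congr rfl h3, sum_const, nsmul_eq_mul]
      have h4 := quadraticChar_card_sqrts hch a
      have h5 : ({x : ZMod p | x ^ 2 = a}.toFinset)
          = univ.filter (fun x : ZMod p => x ^ 2 = a) := by ext; simp
      rw [h5] at h4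
      have h6 : ((#(univ.filter (fun x : ZMod p => x ^ 2 = a)) : ℤ) : ℂ) = χ a + 1 := by
        rw [h4, hχa]; push_cast; ring
      rw [Int.cast_natCast] at h6
      rw [h6]; ring
    rw [h1, sum_congr rfl fun a _ => h2 a, sum_add_distrib, hψ1, add_zero]
    rfl
  have him : (gaussSum χ ψ).im
      = 2 * ∑ s ∈ range ((p + 1) / 2), sin (2 * π * (s : ℝ) ^ 2 / p) := by
    have hf : ∀ n : ℕ, (ψ ((n : ZMod p) ^ 2)).im = sin (2 * π * (n:ℝ) ^ 2 / p) := by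
      intro n
      have := std_im p (n ^ 2)
      push_cast at this
      exact this
    rw [show (p + 1) / 2 = (2 * k + 1) + 1 by omega,
      sum_range_succ' (fun s : ℕ => sin (2 * π * (s : ℝ) ^ 2 / p)) (2 * k + 1), mul_add, mul_sum,
      hG, sum_zmod_eq_range, Complex.im_sum, sum_fold1 p (2 * k + 1) (by omega)]
    simp only [hf]
    rw [add_comm]
    congr 1
    · refine sum_congr rfl fun i hi => ?_
      have := mem_range.1 hi
      have h7 : ((p - (i + 1) : ℕ) : ZMod p) ^ 2 = ((i + 1 : ℕ) : ZMod p) ^ 2 := by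
        rw [Nat.cast_sub (by omega), CharP.cast_eq_zero, zero_sub, neg_sq]
      rw [← hf (p - (i + 1)), h7, hf]; ring
    · simp
  have hbd := gauss_im_bound p k hp
  rw [← him] at hbd
  have hval : (gaussSum χ ψ).im = √p := by
    have hre := congrArg Complex.re hsq
    have him2 := congrArg Complex.im hsq
    rw [sq] at hre him2
    simp only [Complex.mul_re, Complex.mul_im, Complex.neg_re, Complex.neg_im,
      Complex.natCast_re, Complex.natCast_im] at hre him2
    have hss : √(p:ℝ) * √p = p := mul_self_sqrt hp0.le
    have hsp : 0 < √(p:ℝ) := sqrt_pos.2 hp0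
    have hre0 : (gaussSum χ ψ).re = 0 := by
      have : (gaussSum χ ψ).re * (gaussSum χ ψ).im = 0 := by linarith
      rcases mul_eq_zero.1 this with h | h
      · exact h
      · rw [h] at hre; nlinarith [mul_self_nonneg (gaussSum χ ψ).re]
    rw [hre0] at hre
    have : ((gaussSum χ ψ).im - √p) * ((gaussSum χ ψ).im + √p) = 0 := by linarith
    rcases mul_eq_zero.1 this with h | h <;> linarith
  have hshift : ∑ a : ZMod p, χ a * ψ ((m : ZMod p) * a) = χ m * gaussSum χ ψ := by
    by_cases h0 : (m : ZMod p) = 0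
    · rw [h0, hχa 0]; simp [MulChar.sum_eq_zero_of_ne_one hχ1]
    · obtain ⟨u, hu⟩ := isUnit_iff_ne_zero.2 h0
      have h1 := gaussSum_mulShift χ ψ u
      have h2 : χ m * χ m = 1 := by
        rw [hχa, ← Int.cast_mul, ← sq, quadraticChar_sq_one h0]; simp
      rw [← h1, hu, ← mul_assoc, h2, one_mul]
      rfl
  have hfin := congrArg Complex.im hshift
  rw [sum_zmod_eq_range, Complex.im_sum, hχa, int_mul_im, hval] at hfin
  rw [← hfin]
  refine sum_congr rfl fun n _ => ?_
  rw [hχa, int_mul_im, ← std_im]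
  push_cast
  rfl


lemma arg_one_sub (φ : ℝ) (h0 : 0 < φ) (h1 : φ < 2 * π) :
    (1 - Complex.exp (φ * Complex.I)) ∈ Complex.slitPlane ∧
    Complex.arg (1 - Complex.exp (φ * Complex.I)) = (φ - π) / 2 := by
  have hs : 0 < sin (φ / 2) := sin_pos_of_pos_of_lt_pi (by linarith) (by linarith)
  have hform : 1 - Complex.exp (φ * Complex.I)
      = ((2 * sin (φ / 2) : ℝ) : ℂ) * (Complex.cos (((φ - π) / 2 : ℝ) : ℂ)
        + Complex.sin (((φ - π) / 2 : ℝ) : ℂ) * Complex.I) := by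
    have e1 : cos ((φ - π) / 2) = sin (φ / 2) := by
      rw [show (φ - π) / 2 = φ / 2 - π / 2 by ring, cos_sub_pi_div_two]
    have e2 : sin ((φ - π) / 2) = -cos (φ / 2) := by
      rw [show (φ - π) / 2 = φ / 2 - π / 2 by ring, sin_sub_pi_div_two]
    have e3 : cos φ = 1 - 2 * sin (φ / 2) ^ 2 := by
      rw [← cos_two_mul_eq_one_sub]; congr 1; ring
    have e4 : sin φ = 2 * sin (φ / 2) * cos (φ / 2) := by
      rw [← sin_two_mul]; congr 1; ring
    rw [← Complex.ofReal_cos, ← Complex.ofReal_sin, e1, e2]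
    apply Complex.ext
    · rw [Complex.sub_re, Complex.exp_ofReal_mul_I_re, e3]
      simp [-Complex.ofReal_sin, -Complex.ofReal_cos]; ring
    · rw [Complex.sub_im, Complex.exp_ofReal_mul_I_im, e4]
      simp [-Complex.ofReal_sin, -Complex.ofReal_cos]
  have harg : Complex.arg (1 - Complex.exp (φ * Complex.I)) = (φ - π) / 2 := by
    rw [hform, Complex.arg_mul_cos_add_sin_mul_I (by linarith) ⟨by linarith, by linarith⟩]
  refine ⟨?_, harg⟩
  rw [Complex.mem_slitPlane_iff_arg]
  refine ⟨by rw [harg]; linarith, ?_⟩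
  intro h
  have := congrArg Complex.re h
  rw [Complex.sub_re, Complex.exp_ofReal_mul_I_re] at this
  have e3 : cos φ = 1 - 2 * sin (φ / 2) ^ 2 := by
    rw [← cos_two_mul_eq_one_sub]; congr 1; ring
  rw [e3] at this
  simp at this
  exact hs.ne' this

/-- The Abel sums of the sine series. -/
lemma sin_series (φ r : ℝ) (h0 : 0 < r) (h1 : r < 1) :
    HasSum (fun n : ℕ => sin (n * φ) * (r ^ n / n))
      (-Complex.arg (1 - r * Complex.exp (φ * Complex.I))) := by
  have hz : ‖(r : ℂ) * Complex.exp (φ * Complex.I)‖ < 1 := by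
    rw [norm_mul, Complex.norm_exp_ofReal_mul_I, mul_one, Complex.norm_real, norm_of_nonneg h0.le]
    exact h1
  have := Complex.hasSum_im (Complex.hasSum_taylorSeries_neg_log hz)
  rw [Complex.neg_im, Complex.log_im] at this
  convert this using 2 with n
  rw [mul_pow, ← Complex.exp_nat_mul, ← Complex.ofReal_pow, mul_div_right_comm,
    ← Complex.ofReal_natCast, ← Complex.ofReal_div, Complex.im_ofReal_mul,
    ← mul_assoc, ← Complex.ofReal_mul, Complex.exp_ofReal_mul_I_im]
  ring

lemma sin_series_lim (φ : ℝ) (h0 : 0 < φ) (h1 : φ < 2 * π) :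
    Filter.Tendsto (fun r : ℝ => -Complex.arg (1 - r * Complex.exp (φ * Complex.I)))
      (nhdsWithin 1 (Set.Iio 1)) (nhds ((π - φ) / 2)) := by
  obtain ⟨hm, ha⟩ := arg_one_sub φ h0 h1
  have hc : ContinuousAt (fun r : ℝ => -Complex.arg (1 - r * Complex.exp (φ * Complex.I))) 1 := by
    refine ContinuousAt.neg ?_
    have h2 : ContinuousAt (fun r : ℝ => (1 - (r:ℂ) * Complex.exp (φ * Complex.I))) 1 := by
      fun_prop
    refine ContinuousAt.comp (g := Complex.arg) ?_ h2
    apply Complex.continuousAt_arg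
    simpa using hm
  have := hc.tendsto.mono_left (nhdsWithin_le_nhds (s := Set.Iio 1))
  rw [Complex.ofReal_one, one_mul, ha] at this
  convert this using 2
  ring

/-- The quadratic character of `p` as a real completely multiplicative function on `ℕ`. -/
noncomputable def qc (p : ℕ) [Fact p.Prime] : ℕ →*₀ ℝ where
  toFun n := ((quadraticChar (ZMod p) (n : ZMod p) : ℤ) : ℝ)
  map_zero' := by simp
  map_one' := by simp
  map_mul' := by
    intro m n
    rw [Nat.cast_mul, map_mul, Int.cast_mul]

lemma qc_apply (p : ℕ) [Fact p.Prime] (n : ℕ) :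
    qc p n = ((quadraticChar (ZMod p) (n : ZMod p) : ℤ) : ℝ) := rfl

lemma qc_abs_le (p : ℕ) [Fact p.Prime] (n : ℕ) : |qc p n| ≤ 1 := by
  rw [qc_apply]
  rcases quadraticChar_isQuadratic (ZMod p) (n : ZMod p) with h | h | h <;> rw [h] <;> simp

lemma qc_sum_zero (p : ℕ) [Fact p.Prime] (hp2 : p ≠ 2) : ∑ n ∈ range p, qc p n = 0 := by
  have h := quadraticChar_sum_zero (char_ne_two p hp2)
  rw [sum_zmod_eq_range] at h
  have := congrArg (Int.cast : ℤ → ℝ) h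
  push_cast at this
  simpa [qc_apply] using this

lemma qc_partial (p : ℕ) [Fact p.Prime] (hp2 : p ≠ 2) (n : ℕ) :
    |∑ i ∈ range n, qc p i| ≤ p := by
  have hp0 : 0 < p := (Fact.out : p.Prime).pos
  have hper : Function.Periodic (fun n => ∑ i ∈ range n, qc p i) p := by
    intro n
    change ∑ i ∈ range (n + p), qc p i = ∑ i ∈ range n, qc p i
    rw [add_comm, sum_range_add, qc_sum_zero p hp2, zero_add]
    refine sum_congr rfl fun i _ => ?_
    simp [qc_apply]
  have h1 := hper.map_mod_nat n
  change ∑ i ∈ range (n % p), qc p i = ∑ i ∈ range n, qc p i at h1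
  rw [← h1]
  refine (abs_sum_le_sum_abs _ _).trans ?_
  refine (sum_le_sum fun i _ => qc_abs_le p i).trans ?_
  simp
  exact (Nat.mod_lt n hp0).le

lemma first_moment_nonpos (p k : ℕ) [Fact p.Prime] (hp : p = 4 * k + 3) :
    ∑ n ∈ range p, (n : ℝ) * qc p n ≤ 0 := by
  have hp2 : p ≠ 2 := by omega
  have hp0 : (0:ℝ) < p := by
    have : 0 < p := by omega
    exact_mod_cast this
  have hsp : 0 < √(p:ℝ) := sqrt_pos.2 hp0
  have key := abel_limit_nonneg (qc p) (qc_abs_le p) p (qc_partial p hp2)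
    (fun r => 1 / √p * ∑ n ∈ range p, qc p n *
      (-Complex.arg (1 - r * Complex.exp ((2 * π * n / p : ℝ) * Complex.I))))
    (1 / √p * ∑ n ∈ range p, qc p n * ((π - 2 * π * n / p) / 2)) ?_ ?_
  · have h1 : 0 ≤ ∑ n ∈ range p, qc p n * ((π - 2 * π * n / p) / 2) := by
      rw [one_div] at key
      exact nonneg_of_mul_nonneg_right key (inv_pos.2 hsp)
    have h2 : ∑ n ∈ range p, qc p n * ((π - 2 * π * n / p) / 2)
        = π / 2 * ∑ n ∈ range p, qc p n - π / p * ∑ n ∈ range p, (n:ℝ) * qc p n := by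
      rw [mul_sum, mul_sum, ← sum_sub_distrib]
      refine sum_congr rfl fun n _ => ?_
      field_simp
    rw [h2, qc_sum_zero p hp2, mul_zero, zero_sub] at h1
    have h3 : 0 < π / p := by positivity
    by_contra hcon
    push Not at hcon
    linarith [mul_pos h3 hcon]
  · intro r hr0 hr1
    have h1 := (hasSum_sum (s := range p) fun n _ =>
      (sin_series (2 * π * n / p) r hr0 hr1).mul_left (qc p n)).mul_left (1 / √(p:ℝ))
    have hfun : (fun m : ℕ => qc p m * (r ^ m / m)) = fun m : ℕ => 1 / √(p:ℝ) *
        ∑ n ∈ range p, qc p n * (sin (m * (2 * π * n / p)) * (r ^ m / m)) := by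
      funext m
      have h2 := gauss_real p k hp m
      have h3 : ∑ n ∈ range p, qc p n * (sin (m * (2 * π * n / p)) * (r ^ m / m))
          = (qc p m * √p) * (r ^ m / m) := by
        rw [qc_apply p m, ← h2, sum_mul]
        refine sum_congr rfl fun n _ => ?_
        rw [qc_apply, ← mul_assoc]
        congr 3
        push_cast; ring
      rw [h3]
      field_simp
    rw [hfun]
    exact h1
  · refine Filter.Tendsto.const_mul _ (tendsto_finsetSum _ fun n hn => ?_)
    rcases Nat.eq_zero_or_pos n with rfl | hn0
    · simp
    · refine Filter.Tendsto.const_mul _ (sin_series_lim _ ?_ ?_)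
      · have : (0:ℝ) < n := by exact_mod_cast hn0
        positivity
      · have : (n:ℝ) < p := by exact_mod_cast mem_range.1 hn
        rw [div_lt_iff₀ hp0]
        nlinarith [pi_pos]

lemma half_sum_nonneg (p k : ℕ) [Fact p.Prime] (hp : p = 4 * k + 3) :
    0 ≤ ∑ i ∈ range (2 * k + 1), qc p (i + 1) := by
  have hT := first_moment_nonpos p k hp
  have hp2 : p ≠ 2 := by omega
  have hp0 : (0:ℝ) < p := by
    have : 0 < p := by omega
    exact_mod_cast this
  have hneg : ∀ j : ℕ, j ≤ p → qc p (p - j) = - qc p j := by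
    intro j hj
    rw [qc_apply, qc_apply, Nat.cast_sub hj, CharP.cast_eq_zero, zero_sub,
      ← neg_one_mul, map_mul, quadraticChar_neg_one (char_ne_two p hp2), ZMod.card,
      ZMod.χ₄_nat_three_mod_four (by omega)]
    push_cast; ring
  set T := ∑ n ∈ range p, (n : ℝ) * qc p n with hTdef
  set S := ∑ i ∈ range (2 * k + 1), qc p (i + 1) with hS
  set M := ∑ i ∈ range (2 * k + 1), ((i:ℝ) + 1) * qc p (i + 1) with hM
  have h1 : T = 2 * M - p * S := by
    rw [hTdef, sum_fold1 p (2 * k + 1) (by omega), hM, hS, mul_sum, mul_sum, ← sum_sub_distrib]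
    simp only [CharP.cast_eq_zero, zero_mul, zero_add]
    refine sum_congr rfl fun i hi => ?_
    have := mem_range.1 hi
    rw [hneg _ (by omega), Nat.cast_sub (by omega)]
    push_cast; ring
  have h2 : T = qc p 2 * (4 * M - p * S) := by
    rw [hTdef, sum_fold2 p (2 * k + 1) (by omega), hM, hS, mul_sum, mul_sum, ← sum_sub_distrib,
      mul_sum]
    simp only [CharP.cast_eq_zero, zero_mul, zero_add]
    refine sum_congr rfl fun i hi => ?_
    have := mem_range.1 hi
    rw [hneg _ (by omega), Nat.cast_sub (by omega), map_mul]
    push_cast; ring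
  have h20 : ((2 : ℕ) : ZMod p) ≠ 0 := by
    rw [Ne, ZMod.natCast_eq_zero_iff]
    intro h
    have := Nat.le_of_dvd (by norm_num) h
    omega
  have hpS : 0 ≤ p * S := by
    rcases quadraticChar_dichotomy h20 with h | h
    · have : qc p 2 = 1 := by rw [qc_apply, h]; simp
      rw [this] at h2; linarith
    · have : qc p 2 = -1 := by rw [qc_apply, h]; simp
      rw [this] at h2; linarith
  exact nonneg_of_mul_nonneg_right hpS hp0

lemma half_sum_zero (p k : ℕ) [Fact p.Prime] (hp : p = 4 * k + 1) :
    ∑ i ∈ range (2 * k), qc p (i + 1) = 0 := by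
  have hp2 : p ≠ 2 := by omega
  have hpos : ∀ j : ℕ, j ≤ p → qc p (p - j) = qc p j := by
    intro j hj
    rw [qc_apply, qc_apply, Nat.cast_sub hj, CharP.cast_eq_zero, zero_sub,
      ← neg_one_mul, map_mul, quadraticChar_neg_one (char_ne_two p hp2), ZMod.card,
      ZMod.χ₄_nat_one_mod_four (by omega), one_mul]
  have h := qc_sum_zero p hp2
  rw [sum_fold1 p (2 * k) (by omega), map_zero, zero_add] at h
  have h2 : ∑ i ∈ range (2 * k), (qc p (i + 1) + qc p (p - (i + 1)))
      = 2 * ∑ i ∈ range (2 * k), qc p (i + 1) := by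
    rw [mul_sum]
    refine sum_congr rfl fun i hi => ?_
    have := mem_range.1 hi
    rw [hpos _ (by omega)]; ring
  linarith

open scoped Classical in
lemma half_sum_count (p h : ℕ) [Fact p.Prime] (hp : p = 2 * h + 1) :
    ∑ i ∈ range h, qc p (i + 1) = 2 * (((Finset.Icc 1 h).filter
        (fun y => ∃ x : ℤ, x ^ 2 ≡ (y : ℤ) [ZMOD (p : ℤ)])).card : ℝ) - h := by
  have h1 : ∑ i ∈ range h, qc p (i + 1) = ∑ y ∈ Finset.Icc 1 h, qc p y := by
    rw [Finset.range_eq_Ico, Finset.sum_Ico_add' (fun y => qc p y) 0 h 1]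
    rfl
  have h2 : ∀ y ∈ Finset.Icc 1 h, qc p y
      = 2 * (if ∃ x : ℤ, x ^ 2 ≡ (y : ℤ) [ZMOD (p : ℤ)] then (1:ℝ) else 0) - 1 := by
    intro y hy
    have hy := Finset.mem_Icc.1 hy
    have hy0 : (y : ZMod p) ≠ 0 := by
      rw [Ne, ZMod.natCast_eq_zero_iff]
      intro hd
      have := Nat.le_of_dvd (by omega) hd
      omega
    have hiff : (∃ x : ℤ, x ^ 2 ≡ (y : ℤ) [ZMOD (p : ℤ)]) ↔ IsSquare (y : ZMod p) := by
      constructor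
      · rintro ⟨x, hx⟩
        refine ⟨(x : ZMod p), ?_⟩
        have := (ZMod.intCast_eq_intCast_iff _ _ p).2 hx
        push_cast at this
        rw [← this, sq]
      · rintro ⟨r, hr⟩
        refine ⟨(r.val : ℤ), ?_⟩
        rw [← ZMod.intCast_eq_intCast_iff]
        push_cast
        rw [ZMod.natCast_zmod_val, hr, sq]
    by_cases hsq : IsSquare (y : ZMod p)
    · rw [if_pos (hiff.2 hsq), qc_apply, (quadraticChar_one_iff_isSquare hy0).2 hsq]; norm_num
    · rw [if_neg (fun hh => hsq (hiff.1 hh)), qc_apply,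
        quadraticChar_neg_one_iff_not_isSquare.2 hsq]; norm_num
  rw [h1, sum_congr rfl h2, sum_sub_distrib, ← mul_sum, sum_boole]
  simp
  refine Finset.card_bij (fun a _ => (a : ℤ)) ?_ ?_ ?_
  · intro a ha
    simp only [Finset.mem_filter, Finset.mem_image] at ha ⊢
    exact ⟨⟨a, ha.1, rfl⟩, ha.2⟩
  · intro a _ b _ hab
    exact_mod_cast hab
  · intro b hb
    simp only [Finset.mem_filter, Finset.mem_image] at hb
    obtain ⟨⟨a, ha, rfl⟩, hb⟩ := hb
    exact ⟨a, Finset.mem_filter.2 ⟨ha, hb⟩, rfl⟩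


end

open scoped Classical in
/-- For every odd prime `p`, the number `R_b(p)` of quadratic residues of `p` in
`[1, (p-1)/2]` satisfies `4·R_b(p) ≥ p - 1`; in particular `R_b(p) ≥ (p-1)/4`,
with equality exactly when `p ≡ 1 (mod 4)`. -/
theorem four_mul_small_residues_card_ge_of_odd_prime
    (p : ℕ) (hp : p.Prime) (hodd : Odd p) :
    p - 1 ≤ 4 * ((Finset.Icc 1 ((p - 1) / 2)).filter
        (fun y => ∃ x : ℤ, x ^ 2 ≡ (y : ℤ) [ZMOD (p : ℤ)])).card ∧
    (p - 1) / 4 ≤ ((Finset.Icc 1 ((p - 1) / 2)).filter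
        (fun y => ∃ x : ℤ, x ^ 2 ≡ (y : ℤ) [ZMOD (p : ℤ)])).card ∧
    (((Finset.Icc 1 ((p - 1) / 2)).filter
        (fun y => ∃ x : ℤ, x ^ 2 ≡ (y : ℤ) [ZMOD (p : ℤ)])).card = (p - 1) / 4 ↔
      p % 4 = 1) := by
  have : Fact p.Prime := ⟨hp⟩
  obtain ⟨h, hh⟩ := hodd
  have hc := half_sum_count p h hh
  rw [show (p - 1) / 2 = h by omega]
  set R := ((Finset.Icc 1 h).filter
        (fun y => ∃ x : ℤ, x ^ 2 ≡ (y : ℤ) [ZMOD (p : ℤ)])).card with hR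
  rcases Nat.even_or_odd' h with ⟨k, hk | hk⟩
  · have h0 := half_sum_zero p k (by omega)
    rw [← hk, hc] at h0
    have h1 : 2 * (R:ℝ) = h := by linarith
    have h2 : 2 * R = h := by exact_mod_cast h1
    omega
  · have h0 := half_sum_nonneg p k (by omega)
    rw [← hk, hc] at h0
    have h1 : (h:ℝ) ≤ 2 * (R:ℝ) := by linarith
    have h2 : h ≤ 2 * R := by exact_mod_cast h1
    omega
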